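/- arXiv:1408.3859 — 2 statements merged into one kernel-verified Lean document; each statement's English description precedes it below -/
import Mathlib

section
/- Let X be a compact Hausdorff topological space, f : X → X a minimal homeomorphism, and K ⊆ X a compact set with nonempty interior. For x ∈ X set ℓ⁺(x) = min{j ≥ 0 : f^j(x) ∈ int K}, ℓ⁻(x) = min{j > 0 : f^{-j}(x) ∈ int K}, L(x) = {j ∈ ℤ : −ℓ⁻(x) < j < ℓ⁺(x) and f^j(x) ∈ ∂K}, and X_i = {x ∈ X : #L(x) ≥ i}. Then each set X_i is closed in X. -/
/-- `ℓ⁺(x) = min {j ≥ 0 : f^j(x) ∈ int K}`. -/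
noncomputable def ellPlus {X : Type*} [TopologicalSpace X] (f : X ≃ₜ X) (K : Set X)
    (x : X) : ℕ :=
  sInf {j : ℕ | (⇑f)^[j] x ∈ interior K}

/-- `ℓ⁻(x) = min {j > 0 : f^{-j}(x) ∈ int K}`. -/
noncomputable def ellMinus {X : Type*} [TopologicalSpace X] (f : X ≃ₜ X) (K : Set X)
    (x : X) : ℕ :=
  sInf {j : ℕ | 0 < j ∧ (⇑f.symm)^[j] x ∈ interior K}

/-- `L(x) = {j ∈ ℤ : -ℓ⁻(x) < j < ℓ⁺(x), f^j(x) ∈ ∂K}`. -/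
noncomputable def Lset {X : Type*} [TopologicalSpace X] (f : X ≃ₜ X) (K : Set X)
    (x : X) : Set ℤ :=
  {j : ℤ | -(ellMinus f K x : ℤ) < j ∧ j < (ellPlus f K x : ℤ) ∧
    (f.toEquiv ^ j) x ∈ frontier K}

/-- `X_i = {x ∈ X : #L(x) ≥ i}`, the dynamical stratification associated to `K`. -/
noncomputable def stratum {X : Type*} [TopologicalSpace X] (f : X ≃ₜ X) (K : Set X)
    (i : ℕ) : Set X :=
  {x : X | i ≤ (Lset f K x).ncard}

/-!
By minimality the orbit of every point meets `int K`, and compactness of `X` makes this happen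
within a bounded time, hence infinitely often in both time directions. So `ℓ⁺` and `ℓ⁻` are true
minima of hitting times of an open set, which cannot increase under small perturbations of the
point: the time window defining `L(y)` lies in the one defining `L(x)` for `y` near `x`. Since `∂K`
is closed and the window is finite, `L(y) ⊆ L(x)` for `y` near `x`, so `#L` is upper semicontinuous.
-/

open scoped Topology

section Topology

variable {X Y ι : Type*} [TopologicalSpace X] [TopologicalSpace Y]

theorem exists_finset_forall_exists_apply_mem [CompactSpace X] {φ : ι → X → Y} {U : Set Y}
    (hφ : ∀ i, Continuous (φ i)) (hU : IsOpen U) (h : ∀ x, ∃ i, φ i x ∈ U) :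
    ∃ s : Finset ι, ∀ x, ∃ i ∈ s, φ i x ∈ U := by
  obtain ⟨s, hs⟩ := isCompact_univ.elim_finite_subcover (fun i => φ i ⁻¹' U)
    (fun i => hU.preimage (hφ i)) (fun x _ => Set.mem_iUnion.2 (h x))
  exact ⟨s, fun x => by simpa using hs (Set.mem_univ x)⟩

theorem eventually_sInf_setOf_mem_le [ConditionallyCompleteLinearOrderBot ι] [WellFoundedLT ι]
    {A : ι → Set X} (hA : ∀ i, IsOpen (A i)) {x : X} (hx : ∃ i, x ∈ A i) :
    ∀ᶠ y in 𝓝 x, sInf {i | y ∈ A i} ≤ sInf {i | x ∈ A i} := by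
  have hmem : x ∈ A (sInf {i | x ∈ A i}) := csInf_mem (s := {i | x ∈ A i}) hx
  filter_upwards [(hA _).mem_nhds hmem] with y hy using csInf_le' hy

theorem eventually_forall_mem_imp_mem {B : ι → Set X} (hB : ∀ i, IsClosed (B i)) {s : Set ι}
    (hs : s.Finite) (x : X) : ∀ᶠ y in 𝓝 x, ∀ i ∈ s, y ∈ B i → x ∈ B i := by
  have := hs.to_subtype
  filter_upwards [(locallyFinite_of_finite fun i : s => B i).eventually_subset
    (fun i => hB i) x] with y hy i hi hyi using @hy ⟨i, hi⟩ hyi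

end Topology

section Orbits

variable {X : Type*} [TopologicalSpace X] (f : X ≃ₜ X)

theorem continuous_toEquiv_zpow : ∀ n : ℤ, Continuous (f.toEquiv ^ n)
  | .ofNat n => f.continuous.iterate n
  | .negSucc n => f.continuous_symm.iterate (n + 1)

variable {f} {U : Set X}

theorem exists_zpow_symm_mem {x : X} (h : ∃ n : ℤ, (f.toEquiv ^ n) x ∈ U) :
    ∃ n : ℤ, (f.symm.toEquiv ^ n) x ∈ U := by
  obtain ⟨n, hn⟩ := h
  refine ⟨-n, ?_⟩
  rwa [show f.symm.toEquiv = f.toEquiv⁻¹ from rfl, inv_zpow', neg_neg]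

theorem exists_ge_iterate_mem [CompactSpace X] (hU : IsOpen U)
    (horbit : ∀ x, ∃ n : ℤ, (f.toEquiv ^ n) x ∈ U) (m : ℕ) (x : X) :
    ∃ n ≥ m, f^[n] x ∈ U := by
  obtain ⟨s, hs⟩ := exists_finset_forall_exists_apply_mem (continuous_toEquiv_zpow f) hU horbit
  obtain ⟨b, hb⟩ := s.bddBelow
  obtain ⟨n, hn, hmem⟩ := hs ((f.toEquiv ^ (m - b)) x)
  rw [← Equiv.Perm.mul_apply, ← zpow_add] at hmem
  have hle : (m : ℤ) ≤ n + (m - b) := by linarith [hb hn]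
  lift n + (m - b) to ℕ using by omega with k
  exact ⟨k, by exact_mod_cast hle, hmem⟩

theorem exists_ge_iterate_symm_mem [CompactSpace X] (hU : IsOpen U)
    (horbit : ∀ x, ∃ n : ℤ, (f.toEquiv ^ n) x ∈ U) (m : ℕ) (x : X) :
    ∃ n ≥ m, f.symm^[n] x ∈ U :=
  exists_ge_iterate_mem hU (fun x => exists_zpow_symm_mem (horbit x)) m x

end Orbits

section Stratification

variable {X : Type*} [TopologicalSpace X] {f : X ≃ₜ X} {K : Set X} {x : X}

theorem eventually_ellPlus_le (hx : ∃ j : ℕ, f^[j] x ∈ interior K) :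
    ∀ᶠ y in 𝓝 x, ellPlus f K y ≤ ellPlus f K x :=
  eventually_sInf_setOf_mem_le (A := fun j => f^[j] ⁻¹' interior K)
    (fun j => isOpen_interior.preimage (f.continuous.iterate j)) hx

theorem eventually_ellMinus_le (hx : ∃ j > 0, f.symm^[j] x ∈ interior K) :
    ∀ᶠ y in 𝓝 x, ellMinus f K y ≤ ellMinus f K x :=
  eventually_sInf_setOf_mem_le (A := fun j => {y | 0 < j ∧ f.symm^[j] y ∈ interior K})
    (fun j => isOpen_const.and (isOpen_interior.preimage (f.continuous_symm.iterate j))) hx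

theorem finite_Lset (f : X ≃ₜ X) (K : Set X) (x : X) : (Lset f K x).Finite :=
  (Set.finite_Ioo _ _).subset fun _ hj => ⟨hj.1, hj.2.1⟩

theorem eventually_Lset_subset (hpos : ∃ j : ℕ, f^[j] x ∈ interior K)
    (hneg : ∃ j > 0, f.symm^[j] x ∈ interior K) :
    ∀ᶠ y in 𝓝 x, Lset f K y ⊆ Lset f K x := by
  have hfrontier := eventually_forall_mem_imp_mem
    (fun j => (isClosed_frontier (s := K)).preimage (continuous_toEquiv_zpow f j))
    (Set.finite_Ioo (-(ellMinus f K x : ℤ)) (ellPlus f K x)) x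
  filter_upwards [eventually_ellPlus_le hpos, eventually_ellMinus_le hneg, hfrontier]
    with y hplus hminus hfr j ⟨hlo, hhi, hj⟩
  have hlo' : -(ellMinus f K x : ℤ) < j := by omega
  have hhi' : j < ellPlus f K x := by omega
  exact ⟨hlo', hhi', hfr j ⟨hlo', hhi'⟩ hj⟩

theorem upperSemicontinuousAt_ncard_Lset (hpos : ∃ j : ℕ, f^[j] x ∈ interior K)
    (hneg : ∃ j > 0, f.symm^[j] x ∈ interior K) :
    UpperSemicontinuousAt (fun y => (Lset f K y).ncard) x := by
  intro n hn
  filter_upwards [eventually_Lset_subset hpos hneg] with y hy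
  exact (Set.ncard_le_ncard hy (finite_Lset f K x)).trans_lt hn

theorem stratum_isClosed_general (f : X ≃ₜ X) (K : Set X)
    (hpos : ∀ x, ∃ j : ℕ, f^[j] x ∈ interior K)
    (hneg : ∀ x, ∃ j > 0, f.symm^[j] x ∈ interior K) (i : ℕ) :
    IsClosed (stratum f K i) :=
  have husc : UpperSemicontinuous fun x => (Lset f K x).ncard :=
    fun x => upperSemicontinuousAt_ncard_Lset (hpos x) (hneg x)
  husc.isClosed_preimage i

end Stratification

/-- Each set `X_i` of the dynamical stratification is closed. -/
theorem stratum_isClosed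
    {X : Type*} [TopologicalSpace X] [CompactSpace X] [T2Space X]
    (f : X ≃ₜ X)
    (hmin : ∀ x : X, Dense (Set.range fun n : ℤ => (f.toEquiv ^ n) x))
    (K : Set X) (hKc : IsCompact K) (hK : (interior K).Nonempty) :
    ∀ i : ℕ, IsClosed (stratum f K i) := by
  have horbit : ∀ x, ∃ n : ℤ, (f.toEquiv ^ n) x ∈ interior K := fun x =>
    Set.exists_range_iff.1 ((hmin x).exists_mem_open isOpen_interior hK)
  exact stratum_isClosed_general f K
    (fun x => (exists_ge_iterate_mem isOpen_interior horbit 0 x).imp fun _ => And.right)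
    (exists_ge_iterate_symm_mem isOpen_interior horbit 1)
end

section
/- Let X be a compact Hausdorff topological space, f : X → X a minimal homeomorphism, and K ⊆ X a compact set with nonempty interior. Let m(K) be the least positive integer m such that X = ⋃_{j=0}^{m-1} f^{-j}(int K), and set N(K) = {j ∈ ℤ : −m(K) ≤ j ≤ m(K) − 1}. For x ∈ X define ℓ⁺(x) = min{j ≥ 0 : f^j(x) ∈ int K}, ℓ⁻(x) = min{j > 0 : f^{-j}(x) ∈ int K}, L(x) = {j ∈ ℤ : −ℓ⁻(x) < j < ℓ⁺(x) and f^j(x) ∈ ∂K}, M(x) = {j ∈ N(K) : f^j(x) ∈ ∂K}, X_i = {x : #L(x) ≥ i}, W_i = {x : #M(x) ≥ i}, and K_j = K ∩ X_j. Then for all integers i, j ≥ 0 one has: the closure of W_i \ K_j intersected with K_j is contained in W_{i+1}, i.e. cl(W_i \ K_j) ∩ K_j ⊆ W_{i+1}. -/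
/-- `m(K)`: the least positive `m` such that `X = ⋃_{j=0}^{m-1} f^{-j}(int K)`. -/
noncomputable def mOf {X : Type*} [TopologicalSpace X] (f : X ≃ₜ X) (K : Set X) : ℕ :=
  sInf {m : ℕ | 0 < m ∧ ∀ x : X, ∃ j < m, (⇑f)^[j] x ∈ interior K}

/-- `M(x) = {j ∈ N(K) : f^j(x) ∈ ∂K}` where `N(K) = {j ∈ ℤ : -m(K) ≤ j ≤ m(K) - 1}`. -/
noncomputable def Mset {X : Type*} [TopologicalSpace X] (f : X ≃ₜ X) (K : Set X)
    (x : X) : Set ℤ :=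
  {j : ℤ | -(mOf f K : ℤ) ≤ j ∧ j ≤ (mOf f K : ℤ) - 1 ∧ (f.toEquiv ^ j) x ∈ frontier K}

/-- `W_i = {x ∈ X : #M(x) ≥ i}`, the fine dynamical stratification associated to `K`. -/
noncomputable def fineStratum {X : Type*} [TopologicalSpace X] (f : X ≃ₜ X) (K : Set X)
    (i : ℕ) : Set X :=
  {x : X | i ≤ (Mset f K x).ncard}

/-!
Lying on `frontier K` is a closed condition and lying outside `closure K` an open one. The first
gives `M(y) ⊆ M(x)` for `y` near `x`. If moreover `M(x) ⊆ M(y)`, the second shows that `f^k(y)`, for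
`k ∈ N(K)`, can be interior to `K` only if `f^k(x)` is; as the first visits to `int K` take place at
times in `N(K)`, this gives `ℓ⁺(x) ≤ ℓ⁺(y)` and `ℓ⁻(x) ≤ ℓ⁻(y)`, hence `L(x) ⊆ L(y)`, and `x ∈ K_j`
implies `y ∈ K_j`. So the points `y ∈ W_i \ K_j` close to `x ∈ K_j` satisfy `M(y) ⊊ M(x)`, and
`i ≤ #M(y) < #M(x)`.
-/

open Filter Set
open scoped Topology

section ReturnsWithin

variable {α : Type*}

/-- Every orbit segment of length `m` meets `U`, that is, `⋃_{j=0}^{m-1} f^{-j}(U)` is the whole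
space. With `U = int K` this is the covering condition in the definition of `m(K)`. -/
def ReturnsWithin (f : α → α) (U : Set α) (m : ℕ) : Prop :=
  ∀ x, ∃ j < m, f^[j] x ∈ U

theorem ReturnsWithin.exists_iterate_mem_of_leftInverse {f g : α → α} {U : Set α} {m : ℕ}
    (hm : ReturnsWithin f U m) (hfg : Function.LeftInverse f g) (x : α) :
    ∃ j, 0 < j ∧ j ≤ m ∧ g^[j] x ∈ U := by
  obtain ⟨j, hjm, hj⟩ := hm (g^[m] x)
  refine ⟨m - j, by omega, by omega, ?_⟩
  rwa [← Nat.add_sub_cancel' hjm.le, Function.iterate_add_apply, hfg.iterate j] at hj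

end ReturnsWithin

theorem eventually_forall_mem_of_isOpen {ι X Y : Type*} [TopologicalSpace X] [TopologicalSpace Y]
    {s : Set ι} (hs : s.Finite) {g : ι → X → Y} {x : X} (hg : ∀ i ∈ s, ContinuousAt (g i) x)
    {U : Set Y} (hU : IsOpen U) : ∀ᶠ y in 𝓝 x, ∀ i ∈ s, g i x ∈ U → g i y ∈ U :=
  (eventually_all_finite hs).2 fun i hi =>
    eventually_imp_distrib_left.2 fun hx => hg i hi (hU.mem_nhds hx)

section Dynamics

variable {X : Type*} [TopologicalSpace X] {f : X ≃ₜ X} {K : Set X} {m : ℕ} {x y : X}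

theorem iterate_eq_toEquiv_zpow (f : X ≃ₜ X) (n : ℕ) : (⇑f)^[n] = ⇑(f.toEquiv ^ (n : ℤ)) := by
  rw [zpow_natCast]
  exact Equiv.Perm.iterate_eq_pow f.toEquiv n

theorem symm_iterate_eq_toEquiv_zpow (f : X ≃ₜ X) (n : ℕ) :
    (⇑f.symm)^[n] = ⇑(f.toEquiv ^ (-(n : ℤ))) := by
  rw [zpow_neg, zpow_natCast, ← inv_pow]
  exact Equiv.Perm.iterate_eq_pow f.toEquiv⁻¹ n

theorem continuous_toEquiv_zpow_s9 (f : X ≃ₜ X) (k : ℤ) : Continuous (f.toEquiv ^ k) := by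
  obtain ⟨n, rfl | rfl⟩ := k.eq_nat_or_neg
  · exact iterate_eq_toEquiv_zpow f n ▸ f.continuous.iterate n
  · exact symm_iterate_eq_toEquiv_zpow f n ▸ f.symm.continuous.iterate n

theorem exists_natAbs_le_zpow_mem_of_dense_orbits [CompactSpace X]
    (hf : ∀ x, Dense (range fun n : ℤ => (f.toEquiv ^ n) x))
    {U : Set X} (hU : IsOpen U) (hne : U.Nonempty) :
    ∃ a : ℕ, ∀ x, ∃ n : ℤ, n.natAbs ≤ a ∧ (f.toEquiv ^ n) x ∈ U := by
  have orbit_meets (x : X) : ∃ n : ℤ, (f.toEquiv ^ n) x ∈ U := by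
    simpa using (hf x).exists_mem_open hU hne
  obtain ⟨t, ht⟩ := isCompact_univ.elim_finite_subcover (fun n : ℤ => (f.toEquiv ^ n) ⁻¹' U)
    (fun n => hU.preimage (continuous_toEquiv_zpow_s9 f n))
    (fun x _ => mem_iUnion.2 (orbit_meets x))
  refine ⟨t.sup Int.natAbs, fun x => ?_⟩
  obtain ⟨n, hn, hx⟩ := mem_iUnion₂.1 (ht (mem_univ x))
  exact ⟨n, Finset.le_sup hn, hx⟩

theorem exists_returnsWithin_of_dense_orbits [CompactSpace X]
    (hf : ∀ x, Dense (range fun n : ℤ => (f.toEquiv ^ n) x))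
    {U : Set X} (hU : IsOpen U) (hne : U.Nonempty) : ∃ m, ReturnsWithin f U m := by
  obtain ⟨a, ha⟩ := exists_natAbs_le_zpow_mem_of_dense_orbits hf hU hne
  refine ⟨2 * a + 1, fun x => ?_⟩
  -- A visit of `f^a(x)` to `U` at a time in `[-a, a]` is a visit of `x` at a time in `[0, 2a]`.
  obtain ⟨n, hn, hx⟩ := ha ((f.toEquiv ^ (a : ℤ)) x)
  refine ⟨(n + a).toNat, by omega, ?_⟩
  rwa [iterate_eq_toEquiv_zpow, Int.toNat_of_nonneg (by omega), zpow_add, Equiv.Perm.mul_apply]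

theorem returnsWithin_mOf (h : ∃ m, ReturnsWithin f (interior K) m) :
    ReturnsWithin f (interior K) (mOf f K) := by
  obtain ⟨m, hm⟩ := h
  have hm_succ : ∀ x, ∃ j < m + 1, (⇑f)^[j] x ∈ interior K := fun x =>
    (hm x).imp fun _ hj => ⟨hj.1.trans m.lt_succ_self, hj.2⟩
  exact (Nat.sInf_mem (s := {m | 0 < m ∧ ∀ x, ∃ j < m, (⇑f)^[j] x ∈ interior K})
    ⟨m + 1, m.succ_pos, hm_succ⟩).2

theorem iterate_ellPlus_mem_interior (h : ∃ j, (⇑f)^[j] x ∈ interior K) :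
    (⇑f)^[ellPlus f K x] x ∈ interior K :=
  Nat.sInf_mem (s := {j | (⇑f)^[j] x ∈ interior K}) h

theorem symm_iterate_ellMinus_mem_interior (h : ∃ j, 0 < j ∧ (⇑f.symm)^[j] x ∈ interior K) :
    0 < ellMinus f K x ∧ (⇑f.symm)^[ellMinus f K x] x ∈ interior K :=
  Nat.sInf_mem (s := {j | 0 < j ∧ (⇑f.symm)^[j] x ∈ interior K}) h

theorem ellPlus_lt (hm : ReturnsWithin f (interior K) m) (x : X) : ellPlus f K x < m := by
  obtain ⟨j, hjm, hj⟩ := hm x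
  exact (Nat.sInf_le hj).trans_lt hjm

theorem ellMinus_le (hm : ReturnsWithin f (interior K) m) (x : X) : ellMinus f K x ≤ m := by
  obtain ⟨j, hj0, hjm, hj⟩ := hm.exists_iterate_mem_of_leftInverse f.apply_symm_apply x
  exact (Nat.sInf_le (And.intro hj0 hj)).trans hjm

theorem ellPlus_le_ellPlus (hm : ReturnsWithin f (interior K) m)
    (h : ∀ j < m, (⇑f)^[j] y ∈ interior K → (⇑f)^[j] x ∈ interior K) :
    ellPlus f K x ≤ ellPlus f K y := by
  obtain ⟨j, -, hj⟩ := hm y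
  exact Nat.sInf_le (h _ (ellPlus_lt hm y) (iterate_ellPlus_mem_interior ⟨j, hj⟩))

theorem ellMinus_le_ellMinus (hm : ReturnsWithin f (interior K) m)
    (h : ∀ j ≤ m, (⇑f.symm)^[j] y ∈ interior K → (⇑f.symm)^[j] x ∈ interior K) :
    ellMinus f K x ≤ ellMinus f K y := by
  obtain ⟨j, hj0, -, hj⟩ := hm.exists_iterate_mem_of_leftInverse f.apply_symm_apply y
  obtain ⟨hpos, hmem⟩ := symm_iterate_ellMinus_mem_interior ⟨j, hj0, hj⟩
  exact Nat.sInf_le ⟨hpos, h _ (ellMinus_le hm y) hmem⟩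

theorem mem_mset_iff {k : ℤ} :
    k ∈ Mset f K x ↔
      k ∈ Ico (-(mOf f K : ℤ)) (mOf f K) ∧ (f.toEquiv ^ k) x ∈ frontier K := by
  rw [mem_Ico, and_assoc, ← Int.le_sub_one_iff]
  rfl

theorem finite_mset (f : X ≃ₜ X) (K : Set X) (x : X) : (Mset f K x).Finite :=
  (finite_Ico _ _).subset fun _ hk => (mem_mset_iff.1 hk).1

theorem lset_eq_mset_inter_Ioo (hm : ReturnsWithin f (interior K) (mOf f K)) (x : X) :
    Lset f K x = Mset f K x ∩ Ioo (-(ellMinus f K x : ℤ)) (ellPlus f K x) := by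
  ext k
  have := ellPlus_lt hm x
  have := ellMinus_le hm x
  simp only [Lset, Mset, mem_inter_iff, mem_ofPred_eq, mem_Ioo]
  grind

theorem eventually_mset_subset (f : X ≃ₜ X) (K : Set X) (x : X) :
    ∀ᶠ y in 𝓝 x, Mset f K y ⊆ Mset f K x := by
  filter_upwards [eventually_forall_mem_of_isOpen (finite_Ico (-(mOf f K : ℤ)) (mOf f K))
    (fun k _ => (continuous_toEquiv_zpow_s9 f k).continuousAt (x := x))
    (isClosed_frontier (s := K)).isOpen_compl] with y hy k hk
  rw [mem_mset_iff] at hk ⊢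
  exact ⟨hk.1, not_imp_not.1 (hy k hk.1) hk.2⟩

theorem eventually_zpow_mem_interior_of_mset_subset (f : X ≃ₜ X) (K : Set X) (x : X) :
    ∀ᶠ y in 𝓝 x, Mset f K x ⊆ Mset f K y → ∀ k ∈ Ico (-(mOf f K : ℤ)) (mOf f K),
      (f.toEquiv ^ k) y ∈ interior K → (f.toEquiv ^ k) x ∈ interior K := by
  filter_upwards [eventually_forall_mem_of_isOpen (finite_Ico (-(mOf f K : ℤ)) (mOf f K))
    (fun k _ => (continuous_toEquiv_zpow_s9 f k).continuousAt (x := x))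
    (isClosed_closure (s := K)).isOpen_compl] with y exterior_of_exterior hM k hk hy
  have hx_closure : (f.toEquiv ^ k) x ∈ closure K :=
    not_imp_not.1 (exterior_of_exterior k hk) (interior_subset_closure hy)
  by_contra hx
  have hy_frontier : (f.toEquiv ^ k) y ∈ frontier K :=
    (mem_mset_iff.1 (hM (mem_mset_iff.2 ⟨hk, hx_closure, hx⟩))).2
  exact hy_frontier.2 hy

theorem eventually_lset_subset_of_mset_subset
    (hm : ReturnsWithin f (interior K) (mOf f K)) (x : X) :
    ∀ᶠ y in 𝓝 x, Mset f K x ⊆ Mset f K y → Lset f K x ⊆ Lset f K y := by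
  filter_upwards [eventually_zpow_mem_interior_of_mset_subset f K x] with y hy hM
  have hplus : ellPlus f K x ≤ ellPlus f K y := ellPlus_le_ellPlus hm fun j hj => by
    rw [iterate_eq_toEquiv_zpow]
    exact hy hM j ⟨by omega, by omega⟩
  have hminus : ellMinus f K x ≤ ellMinus f K y := ellMinus_le_ellMinus hm fun j hj => by
    have := ellPlus_lt hm x
    rw [symm_iterate_eq_toEquiv_zpow]
    exact hy hM (-j) ⟨by omega, by omega⟩
  rw [lset_eq_mset_inter_Ioo hm, lset_eq_mset_inter_Ioo hm]
  exact inter_subset_inter hM (Ioo_subset_Ioo (by omega) (by omega))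

theorem eventually_mem_of_mset_subset (hK : IsClosed K) (hm : 0 < mOf f K) (hx : x ∈ K) :
    ∀ᶠ y in 𝓝 x, Mset f K x ⊆ Mset f K y → y ∈ K := by
  by_cases hxK : x ∈ interior K
  · filter_upwards [mem_interior_iff_mem_nhds.1 hxK] with y hy _ using hy
  · have hx_mset : 0 ∈ Mset f K x :=
      mem_mset_iff.2 ⟨⟨by omega, by omega⟩, subset_closure hx, hxK⟩
    exact .of_forall fun y hM => hK.frontier_subset (mem_mset_iff.1 (hM hx_mset)).2

theorem eventually_mem_inter_stratum_of_mset_subset (hK : IsClosed K)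
    (hm : ReturnsWithin f (interior K) (mOf f K)) {j : ℕ} (hx : x ∈ K ∩ stratum f K j) :
    ∀ᶠ y in 𝓝 x, Mset f K x ⊆ Mset f K y → y ∈ K ∩ stratum f K j := by
  filter_upwards [eventually_mem_of_mset_subset hK (Nat.zero_lt_of_lt (ellPlus_lt hm x)) hx.1,
    eventually_lset_subset_of_mset_subset hm x] with y hyK hL hM
  have hfin : (Lset f K y).Finite := by
    rw [lset_eq_mset_inter_Ioo hm]
    exact (finite_mset f K y).inter_of_left _
  exact ⟨hyK hM, hx.2.trans (ncard_le_ncard (hL hM) hfin)⟩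

theorem closure_fineStratum_diff_inter_subset_general (hK : IsClosed K)
    (hret : ∃ m, ReturnsWithin f (interior K) m) (i j : ℕ) :
    closure (fineStratum f K i \ (K ∩ stratum f K j)) ∩ (K ∩ stratum f K j) ⊆
      fineStratum f K (i + 1) := by
  rintro x ⟨hx_closure, hx⟩
  obtain ⟨y, ⟨hyW, hyK⟩, hMyx, hMxy⟩ :=
    ((mem_closure_iff_frequently.1 hx_closure).and_eventually
      ((eventually_mset_subset f K x).and
        (eventually_mem_inter_stratum_of_mset_subset hK (returnsWithin_mOf hret) hx))).exists
  have hM_ssubset : Mset f K y ⊂ Mset f K x := ⟨hMyx, fun hM => hyK (hMxy hM)⟩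
  exact Nat.succ_le_of_lt (hyW.trans_lt (ncard_lt_ncard hM_ssubset (finite_mset f K x)))

end Dynamics

/-- (Lemma A.3 of the paper.) With `K_j = K ∩ X_j`, for all `i, j ≥ 0`
one has `cl(W_i \ K_j) ∩ K_j ⊆ W_{i+1}`. -/
theorem closure_fineStratum_diff_inter_subset
    {X : Type*} [TopologicalSpace X] [CompactSpace X] [T2Space X]
    (f : X ≃ₜ X)
    (hmin : ∀ x : X, Dense (Set.range fun n : ℤ => (f.toEquiv ^ n) x))
    (K : Set X) (hKc : IsCompact K) (hK : (interior K).Nonempty) :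
    ∀ i j : ℕ,
      closure (fineStratum f K i \ (K ∩ stratum f K j)) ∩ (K ∩ stratum f K j) ⊆
        fineStratum f K (i + 1) := by
  exact closure_fineStratum_diff_inter_subset_general hKc.isClosed
    (exists_returnsWithin_of_dense_orbits hmin isOpen_interior hK)
end
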